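/- arXiv:math-ph/0606030 — 7 statements merged into one kernel-verified Lean document; each statement's English description precedes it below -/
import Mathlib

section
/- For every natural number n and all n×n complex matrices A and B, the determinant of the 2n×2n complex matrix R = A ⊗ I₂ + B ⊗ σ_y (the Kronecker product of A with the 2×2 identity plus the Kronecker product of B with the Pauli matrix σ_y) satisfies det R = det(A + B) · det(A − B). -/
/-!
Regard `A ⊗ I + B ⊗ S` as a matrix of blocks `A i j • I + B i j • S`. These blocks commute, being
the images of the entries of the pencil `A + X B` under `X ↦ S`, so the determinant is `det (p(S))`
where `p = det (A + X B)`. If the 2 × 2 matrix `S` has eigenvalues `a` and `b`, then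
`det (p(S)) = p(a) p(b) = det (A + a B) det (A + b B)`; the eigenvalues of `σ_y` are `1` and `-1`.
-/

open scoped Kronecker

/-- The Pauli matrix `σ_y`. -/
noncomputable def sigmaY : Matrix (Fin 2) (Fin 2) ℂ :=
  !![0, -Complex.I; Complex.I, 0]

section CommRing

open Polynomial

variable {R m k : Type*} [CommRing R] [Fintype m] [DecidableEq m] [Fintype k] [DecidableEq k]

/-- The determinant `det (A + X B)` of the matrix pencil spanned by `A` and `B`, as a polynomial
in the pencil parameter `X`. -/
noncomputable def detPencil (A B : Matrix m m R) : R[X] :=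
  (A.map C + (X : R[X]) • B.map C).det

theorem eval_detPencil (A B : Matrix m m R) (r : R) :
    (detPencil A B).eval r = (A + r • B).det := by
  rw [detPencil, ← coe_evalRingHom, RingHom.map_det]
  congr 1
  ext i j
  simp [mul_comm r]

theorem det_kronecker_one_add_kronecker_eq_det_aeval (A B : Matrix m m R) (S : Matrix k k R) :
    (A ⊗ₖ (1 : Matrix k k R) + B ⊗ₖ S).det = (aeval S (detPencil A B)).det := by
  have comp_pencil : A ⊗ₖ (1 : Matrix k k R) + B ⊗ₖ S =
      Matrix.comp m m k k R ((A.map C + (X : R[X]) • B.map C).map (aeval S).toRingHom) := by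
    ext ⟨i, s⟩ ⟨j, t⟩
    simp [Algebra.algebraMap_eq_smul_one]
  rw [comp_pencil, ← Matrix.det_det]
  rfl

theorem exists_eq_C_eval_add_X_sub_C_mul (p : R[X]) (r : R) :
    ∃ q, p = C (p.eval r) + (X - C r) * q :=
  ⟨p /ₘ (X - C r), by rw [← modByMonic_X_sub_C_eq_C_eval, modByMonic_add_div]⟩

section FinTwo

variable {S : Matrix (Fin 2) (Fin 2) R} {a b : R}

theorem charpoly_fin_two_eq_mul (htrace : S.trace = a + b) (hdet : S.det = a * b) :
    S.charpoly = (X - C a) * (X - C b) := by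
  nontriviality R
  rw [Matrix.charpoly_fin_two, htrace, hdet, C_add, C_mul]
  ring

theorem det_smul_one_add_smul_fin_two (htrace : S.trace = a + b) (hdet : S.det = a * b)
    (x y : R) : (x • 1 + y • S).det = (x + y * a) * (x + y * b) := by
  rw [Matrix.trace_fin_two] at htrace
  rw [Matrix.det_fin_two] at hdet
  simp only [Matrix.det_fin_two, Matrix.add_apply, Matrix.smul_apply, Matrix.one_fin_two,
    Matrix.of_apply, Matrix.cons_val, smul_eq_mul]
  linear_combination x * y * htrace + y ^ 2 * hdet

theorem det_aeval_fin_two (htrace : S.trace = a + b) (hdet : S.det = a * b) (p : R[X]) :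
    (aeval S p).det = p.eval a * p.eval b := by
  obtain ⟨q, hp⟩ := exists_eq_C_eval_add_X_sub_C_mul p a
  obtain ⟨q', hq⟩ := exists_eq_C_eval_add_X_sub_C_mul q b
  have newton_form :
      p = C (p.eval a) + C (q.eval b) * (X - C a) + (X - C a) * (X - C b) * q' := by
    linear_combination hp + (X - C a) * hq
  have eval_b : p.eval b = p.eval a + q.eval b * (b - a) := by
    simpa using congrArg (eval b) newton_form
  have cayley_hamilton : aeval S ((X - C a) * (X - C b)) = 0 := by
    rw [← charpoly_fin_two_eq_mul htrace hdet, Matrix.aeval_self_charpoly]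
  have aeval_S : aeval S p = (p.eval a - q.eval b * a) • 1 + q.eval b • S := by
    conv_lhs => rw [newton_form, map_add, map_mul _ (_ * _), cayley_hamilton]
    simp only [map_add, map_mul, map_sub, aeval_C, aeval_X, Algebra.algebraMap_eq_smul_one,
      zero_mul, smul_mul_assoc, one_mul]
    module
  rw [aeval_S, det_smul_one_add_smul_fin_two htrace hdet, eval_b]
  ring

end FinTwo

theorem det_kronecker_I2_add_kronecker_sigmaY_general (A B : Matrix m m R)
    {S : Matrix (Fin 2) (Fin 2) R} {a b : R}
    (htrace : S.trace = a + b) (hdet : S.det = a * b) :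
    (A ⊗ₖ (1 : Matrix (Fin 2) (Fin 2) R) + B ⊗ₖ S).det
      = (A + a • B).det * (A + b • B).det := by
  rw [det_kronecker_one_add_kronecker_eq_det_aeval, det_aeval_fin_two htrace hdet, eval_detPencil,
    eval_detPencil]

end CommRing

/-- Determinant part of Lemma 1: for `R = A ⊗ I₂ + B ⊗ σ_y`,
`det R = det (A + B) * det (A - B)`. -/
theorem det_kronecker_I2_add_kronecker_sigmaY (n : ℕ)
    (A B : Matrix (Fin n) (Fin n) ℂ) :
    (A ⊗ₖ (1 : Matrix (Fin 2) (Fin 2) ℂ) + B ⊗ₖ sigmaY).det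
      = (A + B).det * (A - B).det := by
  simpa [sub_eq_add_neg] using det_kronecker_I2_add_kronecker_sigmaY_general A B (S := sigmaY)
    (a := 1) (b := -1) (by simp [sigmaY, Matrix.trace_fin_two]) (by simp [sigmaY])
end

section
/- Let n be a natural number and let A and B be n×n complex matrices such that both A + B and A − B are invertible. Then the 2n×2n matrix R = A ⊗ I₂ + B ⊗ σ_y is invertible and its inverse is R⁻¹ = ½[(A+B)⁻¹ + (A−B)⁻¹] ⊗ I₂ + ½[(A+B)⁻¹ − (A−B)⁻¹] ⊗ σ_y. -/
/-! An involution `S` has the form `2P - 1` with `P` idempotent, and then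
`A ⊗ 1 + B ⊗ S = (A + B) ⊗ P + (A - B) ⊗ (1 - P)`. Since `P` and `1 - P` are complementary
orthogonal idempotents, such a matrix is inverted by inverting the coefficients of `P` and `1 - P`
separately. Reading the same decomposition backwards gives the inverse in terms of `1` and `S`. -/

open scoped Kronecker

theorem exists_isIdempotentElem_eq_two_mul_sub_one (R : Type*) {A : Type*} [CommSemiring R] [Ring A]
    [Algebra R A] [Invertible (2 : R)] {s : A} (hs : s * s = 1) :
    ∃ e : A, IsIdempotentElem e ∧ s = 2 * e - 1 := by
  set e : A := ⅟(2 : R) • (1 + s) with he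
  have two_mul_e : 2 * e = 1 + s := by
    rw [two_mul, ← two_smul R e, he, smul_invOf_smul]
  have one_add_s_mul_self : (1 + s) * (1 + s) = (2 : R) • (1 + s) := by
    rw [add_mul, mul_add, mul_add, hs, two_smul]
    noncomm_ring
  refine ⟨e, ?_, by rw [two_mul_e, add_sub_cancel_left]⟩
  calc e * e = ⅟(2 : R) • ⅟(2 : R) • ((1 + s) * (1 + s)) := by rw [he, smul_mul_smul_comm, mul_smul]
    _ = e := by rw [one_add_s_mul_self, invOf_smul_smul]

section Kronecker

variable {R l m n p : Type*} [CommRing R] [DecidableEq p]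

theorem kronecker_one_add_kronecker_two_mul_sub_one [Fintype p] (A B : Matrix m n R)
    (P : Matrix p p R) :
    A ⊗ₖ (1 : Matrix p p R) + B ⊗ₖ (2 * P - 1) = (A + B) ⊗ₖ P + (A - B) ⊗ₖ (1 - P) := by
  ext ⟨i, a⟩ ⟨j, b⟩
  simp only [two_mul, Matrix.add_apply, Matrix.sub_apply, Matrix.kronecker_apply]
  ring

variable [Fintype m] [Fintype p] {P : Matrix p p R}

theorem kronecker_add_kronecker_one_sub_mul (hP : IsIdempotentElem P) (A B : Matrix l m R)
    (C D : Matrix m n R) :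
    (A ⊗ₖ P + B ⊗ₖ (1 - P)) * (C ⊗ₖ P + D ⊗ₖ (1 - P)) = (A * C) ⊗ₖ P + (B * D) ⊗ₖ (1 - P) := by
  simp only [Matrix.add_mul, Matrix.mul_add, ← Matrix.mul_kronecker_mul, hP.eq, hP.one_sub.eq,
    hP.mul_one_sub_self, hP.one_sub_mul_self, Matrix.kronecker_zero, add_zero, zero_add]

variable [DecidableEq m] {A B : Matrix m m R}

theorem kronecker_add_kronecker_one_sub_mul_inv_eq_one (hP : IsIdempotentElem P) (hA : IsUnit A)
    (hB : IsUnit B) :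
    (A ⊗ₖ P + B ⊗ₖ (1 - P)) * (A⁻¹ ⊗ₖ P + B⁻¹ ⊗ₖ (1 - P)) = 1 := by
  rw [kronecker_add_kronecker_one_sub_mul hP,
    Matrix.mul_nonsing_inv A (A.isUnit_iff_isUnit_det.mp hA),
    Matrix.mul_nonsing_inv B (B.isUnit_iff_isUnit_det.mp hB),
    ← Matrix.kronecker_add, add_sub_cancel, Matrix.one_kronecker_one]

theorem inv_kronecker_I2_add_kronecker_sigmaY_general [Invertible (2 : R)] {S : Matrix p p R}
    (hS : S * S = 1) (hadd : IsUnit (A + B)) (hsub : IsUnit (A - B)) :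
    IsUnit (A ⊗ₖ (1 : Matrix p p R) + B ⊗ₖ S) ∧
    (A ⊗ₖ (1 : Matrix p p R) + B ⊗ₖ S)⁻¹
      = ⅟(2 : R) • (((A + B)⁻¹ + (A - B)⁻¹) ⊗ₖ (1 : Matrix p p R))
        + ⅟(2 : R) • (((A + B)⁻¹ - (A - B)⁻¹) ⊗ₖ S) := by
  obtain ⟨P, hP, rfl⟩ := exists_isIdempotentElem_eq_two_mul_sub_one R hS
  have idempotent_form (U V : Matrix m m R) :
      ⅟(2 : R) • ((U + V) ⊗ₖ (1 : Matrix p p R)) + ⅟(2 : R) • ((U - V) ⊗ₖ (2 * P - 1))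
        = U ⊗ₖ P + V ⊗ₖ (1 - P) := by
    rw [← smul_add, kronecker_one_add_kronecker_two_mul_sub_one, add_add_sub_cancel,
      add_sub_sub_cancel, ← two_smul R U, ← two_smul R V, Matrix.smul_kronecker,
      Matrix.smul_kronecker, ← smul_add, invOf_smul_smul]
  have mul_inverse := kronecker_add_kronecker_one_sub_mul_inv_eq_one hP hadd hsub
  rw [idempotent_form, kronecker_one_add_kronecker_two_mul_sub_one]
  exact ⟨.of_mul_eq_one _ mul_inverse, Matrix.inv_eq_right_inv mul_inverse⟩

end Kronecker

theorem sigmaY_mul_sigmaY : sigmaY * sigmaY = 1 := by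
  simp [sigmaY, Matrix.one_fin_two]

/-- Inverse part of Lemma 1: if `A + B` and `A - B` are invertible then
`R = A ⊗ I₂ + B ⊗ σ_y` is invertible with
`R⁻¹ = ½[(A+B)⁻¹ + (A−B)⁻¹] ⊗ I₂ + ½[(A+B)⁻¹ − (A−B)⁻¹] ⊗ σ_y`. -/
theorem inv_kronecker_I2_add_kronecker_sigmaY (n : ℕ)
    (A B : Matrix (Fin n) (Fin n) ℂ)
    (h₁ : IsUnit (A + B)) (h₂ : IsUnit (A - B)) :
    IsUnit (A ⊗ₖ (1 : Matrix (Fin 2) (Fin 2) ℂ) + B ⊗ₖ sigmaY) ∧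
    (A ⊗ₖ (1 : Matrix (Fin 2) (Fin 2) ℂ) + B ⊗ₖ sigmaY)⁻¹
      = (2⁻¹ : ℂ) • (((A + B)⁻¹ + (A - B)⁻¹) ⊗ₖ (1 : Matrix (Fin 2) (Fin 2) ℂ))
        + (2⁻¹ : ℂ) • (((A + B)⁻¹ - (A - B)⁻¹) ⊗ₖ sigmaY) := by
  simpa only [invOf_eq_inv] using
    inv_kronecker_I2_add_kronecker_sigmaY_general sigmaY_mul_sigmaY h₁ h₂
end

section
/- Let A and B be n×n real matrices with A symmetric (Aᵀ = A) and B antisymmetric (Bᵀ = −B), and regard them as complex matrices via the inclusion ℝ ⊆ ℂ. Then det(A ⊗ I₂ + B ⊗ σ_y) = (det(A + B))². In particular this determinant is a real, nonnegative number. -/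
/-!
The matrix `σ_y` is diagonalizable with eigenvalues `1` and `-1`. Conjugating by `1 ⊗ P`, where the
columns of `P` are eigenvectors, turns `A ⊗ 1 + B ⊗ σ_y` into a block diagonal matrix with blocks
`A + B` and `A - B`, and these are transposes of each other when `A` is symmetric and `B` is
antisymmetric.
-/

open Matrix

open scoped Kronecker

section Diagonalization

variable {R l m n : Type*} [DecidableEq m]

lemma kronecker_one_add_kronecker_diagonal [CommSemiring R] (A B : Matrix l n R) (d : m → R) :
    A ⊗ₖ (1 : Matrix m m R) + B ⊗ₖ diagonal d = blockDiagonal fun k => A + d k • B := by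
  rw [kronecker_one, kronecker_diagonal, ← blockDiagonal_add]
  simp only [op_smul_eq_smul, Pi.add_def]

variable [CommRing R] [Fintype m] [Fintype n] [DecidableEq n]

lemma det_kronecker_one_add_kronecker_of_mul_eq_mul_diagonal (A B : Matrix n n R)
    {S P : Matrix m m R} {d : m → R} (hP : IsRegular P.det) (hS : S * P = P * diagonal d) :
    (A ⊗ₖ (1 : Matrix m m R) + B ⊗ₖ S).det = ∏ k, (A + d k • B).det := by
  have hconj : (A ⊗ₖ (1 : Matrix m m R) + B ⊗ₖ S) * ((1 : Matrix n n R) ⊗ₖ P)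
      = ((1 : Matrix n n R) ⊗ₖ P) * blockDiagonal fun k => A + d k • B := by
    rw [← kronecker_one_add_kronecker_diagonal, add_mul, mul_add]
    simp only [← mul_kronecker_mul, hS, one_mul, mul_one]
  have hreg : IsRegular ((1 : Matrix n n R) ⊗ₖ P).det := by
    rw [det_kronecker, det_one, one_pow, one_mul]
    exact hP.pow _
  apply hreg.right
  simpa only [det_mul, det_blockDiagonal, mul_comm] using congrArg det hconj

end Diagonalization

/-- A matrix of eigenvectors of `σ_y`, used to diagonalize it: the columns `(1, i)` and `(1, -i)`
belong to the eigenvalues `1` and `-1`, in this order. -/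
noncomputable def sigmaYEigenvectors : Matrix (Fin 2) (Fin 2) ℂ :=
  !![1, 1; Complex.I, -Complex.I]

lemma sigmaY_mul_sigmaYEigenvectors :
    sigmaY * sigmaYEigenvectors = sigmaYEigenvectors * diagonal ![1, -1] := by
  simp [sigmaY, sigmaYEigenvectors, diagonal_fin_two]

lemma det_sigmaYEigenvectors : sigmaYEigenvectors.det = -2 * Complex.I := by
  rw [sigmaYEigenvectors, det_fin_two_of]
  ring

section SigmaY

variable {n : Type*} [Fintype n] [DecidableEq n]

lemma det_kronecker_one_add_kronecker_sigmaY (A B : Matrix n n ℂ) :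
    (A ⊗ₖ (1 : Matrix (Fin 2) (Fin 2) ℂ) + B ⊗ₖ sigmaY).det = (A + B).det * (A - B).det := by
  have hreg : IsRegular sigmaYEigenvectors.det :=
    IsRegular.of_ne_zero (by simp [det_sigmaYEigenvectors])
  rw [det_kronecker_one_add_kronecker_of_mul_eq_mul_diagonal A B hreg
    sigmaY_mul_sigmaYEigenvectors]
  simp [sub_eq_add_neg]

theorem det_kronecker_symm_antisymm_sq_general {A B : Matrix n n ℂ}
    (hA : A.IsSymm) (hB : Bᵀ = -B) :
    (A ⊗ₖ (1 : Matrix (Fin 2) (Fin 2) ℂ) + B ⊗ₖ sigmaY).det = (A + B).det ^ 2 := by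
  have htranspose : (A + B)ᵀ = A - B := by
    rw [transpose_add, hA.eq, hB, sub_eq_add_neg]
  rw [det_kronecker_one_add_kronecker_sigmaY, ← htranspose, det_transpose, sq]

end SigmaY

/-- For real `A` symmetric and `B` antisymmetric,
`det (A ⊗ I₂ + B ⊗ σ_y) = (det (A + B))²`, a real nonnegative number. -/
theorem det_kronecker_symm_antisymm_sq (n : ℕ)
    (A B : Matrix (Fin n) (Fin n) ℝ)
    (hA : A.IsSymm) (hB : Bᵀ = -B) :
    ((A.map (Complex.ofReal)) ⊗ₖ (1 : Matrix (Fin 2) (Fin 2) ℂ)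
        + (B.map (Complex.ofReal)) ⊗ₖ sigmaY).det
      = (((A + B).det : ℝ) : ℂ) ^ 2 ∧
    (0 : ℝ) ≤ ((A + B).det) ^ 2 := by
  have hB' : (B.map Complex.ofReal)ᵀ = -B.map Complex.ofReal := by
    rw [← transpose_map, hB, Matrix.map_neg _ Complex.ofReal_neg]
  have hdet : (A.map Complex.ofReal + B.map Complex.ofReal).det = ((A + B).det : ℂ) := by
    rw [← Matrix.map_add _ Complex.ofReal_add]
    exact (Complex.ofRealHom.map_det (A + B)).symm
  exact ⟨hdet ▸ det_kronecker_symm_antisymm_sq_general (hA.map _) hB', sq_nonneg _⟩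
end

section
/- Let m and n be natural numbers, let A and B be n×n complex matrices, and let σ be the 2m×2m block-diagonal matrix consisting of m copies of σ_y on the diagonal (equivalently σ = I_m ⊗ σ_y). Then det(A ⊗ I_{2m} + B ⊗ σ) = (det(A + B))^m · (det(A − B))^m. In particular, if A and B are real with A symmetric and B antisymmetric, this determinant equals (det(A + B))^{2m}. -/
/-!
For any square `S`, permuting the tensor factors turns `A ⊗ I + B ⊗ (I_κ ⊗ S)` into `(A ⊗ I + B ⊗ S)
⊗ I_κ`, whose determinant is a power of `det (A ⊗ I + B ⊗ S)`. A change of basis in the second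
factor makes `S = σ_y` upper triangular with diagonal entries `1` and `-1`, and then `A ⊗ I + B ⊗ S`
is block upper triangular with diagonal blocks `A + B` and `A - B`. Only the antidiagonal shape of
`σ_y` and the product `1` of its two entries matter, and triangularizing rather than diagonalizing
avoids dividing by `2`, so the argument works over every commutative ring.
For `A` symmetric and `B` antisymmetric, `A - B = (A + B)ᵀ`, so the two factors coincide.
-/

open Matrix

open scoped Kronecker

section Kronecker

variable {ι κ μ R : Type*} [Fintype ι] [DecidableEq ι] [Fintype κ] [DecidableEq κ]
  [Fintype μ] [DecidableEq μ] [CommRing R]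

lemma det_kronecker_one_add_kronecker_one_kronecker (A B : Matrix ι ι R) (S : Matrix μ μ R) :
    (A ⊗ₖ (1 : Matrix (κ × μ) (κ × μ) R) + B ⊗ₖ ((1 : Matrix κ κ R) ⊗ₖ S)).det
      = (A ⊗ₖ (1 : Matrix μ μ R) + B ⊗ₖ S).det ^ Fintype.card κ := by
  let e : ι × κ × μ ≃ (ι × μ) × κ :=
    ((Equiv.refl ι).prodCongr (Equiv.prodComm κ μ)).trans (Equiv.prodAssoc ι μ κ).symm
  have hperm : A ⊗ₖ (1 : Matrix (κ × μ) (κ × μ) R) + B ⊗ₖ ((1 : Matrix κ κ R) ⊗ₖ S)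
      = ((A ⊗ₖ (1 : Matrix μ μ R) + B ⊗ₖ S) ⊗ₖ (1 : Matrix κ κ R)).submatrix e e := by
    ext ⟨i, k, p⟩ ⟨j, l, q⟩
    by_cases hkl : k = l <;> simp [e, one_apply, hkl]
  rw [hperm, det_submatrix_equiv_self, det_kronecker, det_one, one_pow, mul_one]

lemma det_kronecker_one_add_kronecker_eq_of_mul_eq_mul (A B : Matrix ι ι R) {S T P : Matrix κ κ R}
    (hP : IsRegular P.det) (hST : S * P = P * T) :
    (A ⊗ₖ (1 : Matrix κ κ R) + B ⊗ₖ S).det = (A ⊗ₖ (1 : Matrix κ κ R) + B ⊗ₖ T).det := by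
  have hconj : (A ⊗ₖ (1 : Matrix κ κ R) + B ⊗ₖ S) * ((1 : Matrix ι ι R) ⊗ₖ P)
      = ((1 : Matrix ι ι R) ⊗ₖ P) * (A ⊗ₖ (1 : Matrix κ κ R) + B ⊗ₖ T) := by
    simp only [add_mul, mul_add, ← mul_kronecker_mul, one_mul, mul_one, hST]
  have hreg : IsRegular ((1 : Matrix ι ι R) ⊗ₖ P).det := by
    rw [det_kronecker, det_one, one_pow, one_mul]
    exact hP.pow _
  apply hreg.right
  simpa only [det_mul, mul_comm] using congr_arg det hconj

lemma det_kronecker_one_add_kronecker_of_blockTriangular [LinearOrder κ] (A B : Matrix ι ι R)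
    {T : Matrix κ κ R} (hT : T.BlockTriangular id) :
    (A ⊗ₖ (1 : Matrix κ κ R) + B ⊗ₖ T).det = ∏ k, (A + T k k • B).det := by
  have htri : (A ⊗ₖ (1 : Matrix κ κ R) + B ⊗ₖ T).BlockTriangular Prod.snd := by
    rintro ⟨i, k⟩ ⟨j, l⟩ hlk
    simp [one_apply_ne (ne_of_gt hlk), hT hlk]
  rw [htri.det_fintype]
  refine Finset.prod_congr rfl fun k _ => ?_
  let e : ι ≃ {p : ι × κ // p.2 = k} :=
    { toFun i := ⟨(i, k), rfl⟩
      invFun p := p.1.1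
      left_inv _ := rfl
      right_inv := by rintro ⟨⟨i, l⟩, rfl⟩; rfl }
  rw [← det_submatrix_equiv_self e]
  congr 1
  ext i j
  simp [e, toSquareBlock_def, mul_comm]

lemma det_kronecker_one_add_kronecker_antidiagonal (A B : Matrix ι ι R) {b c : R}
    (hbc : b * c = 1) :
    (A ⊗ₖ (1 : Matrix (Fin 2) (Fin 2) R) + B ⊗ₖ !![0, b; c, 0]).det
      = (A + B).det * (A - B).det := by
  -- The first column of `P` is a fixed vector of the antidiagonal matrix.
  let P : Matrix (Fin 2) (Fin 2) R := !![b, 1; 1, 0]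
  have hP : IsRegular P.det := by
    simpa [P, det_fin_two_of] using (isUnit_one (M := R)).neg.isRegular
  have hconj : !![0, b; c, 0] * P = P * !![1, c; 0, -1] := by
    simp [P, hbc, mul_comm c b]
  have htri : (!![1, c; 0, -1] : Matrix (Fin 2) (Fin 2) R).BlockTriangular id := by
    intro i j hji
    fin_cases i <;> fin_cases j <;> simp_all
  rw [det_kronecker_one_add_kronecker_eq_of_mul_eq_mul A B hP hconj,
    det_kronecker_one_add_kronecker_of_blockTriangular A B htri]
  simp [Fin.prod_univ_two, sub_eq_add_neg]

lemma det_sub_eq_det_add_of_isSymm_of_transpose_eq_neg {A B : Matrix ι ι R} (hA : A.IsSymm)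
    (hB : Bᵀ = -B) : (A - B).det = (A + B).det := by
  rw [← det_transpose (A + B), transpose_add, hA.eq, hB, sub_eq_add_neg]

lemma det_map_add_map {R' : Type*} [CommRing R'] (f : R →+* R') (A B : Matrix ι ι R) :
    (A.map f + B.map f).det = f (A + B).det := by
  rw [← Matrix.map_add f (map_add f), f.map_det, RingHom.mapMatrix_apply]

theorem det_kronecker_blockSigma_general (A B : Matrix ι ι R) {b c : R} (hbc : b * c = 1) :
    (A ⊗ₖ (1 : Matrix (κ × Fin 2) (κ × Fin 2) R)
        + B ⊗ₖ ((1 : Matrix κ κ R) ⊗ₖ !![0, b; c, 0])).det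
      = (A + B).det ^ Fintype.card κ * (A - B).det ^ Fintype.card κ ∧
    (A.IsSymm → Bᵀ = -B →
      (A ⊗ₖ (1 : Matrix (κ × Fin 2) (κ × Fin 2) R)
          + B ⊗ₖ ((1 : Matrix κ κ R) ⊗ₖ !![0, b; c, 0])).det
        = (A + B).det ^ (2 * Fintype.card κ)) := by
  rw [det_kronecker_one_add_kronecker_one_kronecker,
    det_kronecker_one_add_kronecker_antidiagonal A B hbc, mul_pow]
  refine ⟨rfl, fun hA hB => ?_⟩
  rw [det_sub_eq_det_add_of_isSymm_of_transpose_eq_neg hA hB, two_mul, pow_add]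

end Kronecker

/-- For `σ = I_m ⊗ σ_y` (the block diagonal matrix of `m` copies of `σ_y`),
`det (A ⊗ I_{2m} + B ⊗ σ) = det (A + B) ^ m * det (A - B) ^ m`; in particular
for real `A` symmetric and `B` antisymmetric this equals `det (A + B) ^ (2m)`. -/
theorem det_kronecker_blockSigma (m n : ℕ) (A B : Matrix (Fin n) (Fin n) ℂ) :
    (A ⊗ₖ (1 : Matrix (Fin m × Fin 2) (Fin m × Fin 2) ℂ)
        + B ⊗ₖ ((1 : Matrix (Fin m) (Fin m) ℂ) ⊗ₖ sigmaY)).det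
      = (A + B).det ^ m * (A - B).det ^ m ∧
    ∀ (A₀ B₀ : Matrix (Fin n) (Fin n) ℝ), A₀.IsSymm → B₀ᵀ = -B₀ →
      ((A₀.map (Complex.ofReal)) ⊗ₖ (1 : Matrix (Fin m × Fin 2) (Fin m × Fin 2) ℂ)
          + (B₀.map (Complex.ofReal)) ⊗ₖ ((1 : Matrix (Fin m) (Fin m) ℂ) ⊗ₖ sigmaY)).det
        = (((A₀ + B₀).det : ℝ) : ℂ) ^ (2 * m) := by
  have hI : -Complex.I * Complex.I = 1 := by simp
  refine ⟨by simpa [sigmaY] using (det_kronecker_blockSigma_general (κ := Fin m) A B hI).1,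
    fun A₀ B₀ hA hB => ?_⟩
  have hB' : (B₀.map Complex.ofReal)ᵀ = -B₀.map Complex.ofReal := by
    rw [← transpose_map, hB, Matrix.map_neg _ Complex.ofReal_neg]
  have hdet : (A₀.map Complex.ofReal + B₀.map Complex.ofReal).det = ((A₀ + B₀).det : ℂ) :=
    det_map_add_map Complex.ofRealHom A₀ B₀
  rw [← hdet]
  simpa [sigmaY] using
    (det_kronecker_blockSigma_general (κ := Fin m) _ _ hI).2 (hA.map Complex.ofReal) hB'
end

section
/- Let N be a natural number, let a₁,…,a_N be positive real numbers, let A be the N×N diagonal matrix with diagonal entries a₁,…,a_N, and let B be an N×N real skew-symmetric matrix (Bᵀ = −B). Then det(A + B) ≥ Π_{i=1}^N a_i > 0; in particular A + B is invertible. -/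
/-!
Writing a positive definite `A` as `Yᵀ Y` with `Y` invertible gives
`A + B = Yᵀ (1 + K) Y`, where `K = Y⁻ᵀ B Y⁻¹` is again skew-symmetric, so it suffices to show
`1 ≤ det (1 + K)`. Since `(1 + K)ᵀ (1 + K) = 1 + Kᵀ K` and `Kᵀ K` is positive semidefinite,
`|det (1 + K)| ≥ 1`. The same bound holds for every `t K`, so `t ↦ det (1 + t K)` never vanishes and
keeps the positive sign it has at `t = 0`.
-/

open Matrix

section

variable {n 𝕜 : Type*} [Fintype n] [DecidableEq n] [RCLike 𝕜]

theorem det_one_add_eq_prod_eigenvalues {A : Matrix n n 𝕜} (hA : A.IsHermitian) :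
    (1 + A).det = ∏ i, (1 + (hA.eigenvalues i : 𝕜)) := by
  have hconj : 1 + A = Unitary.conjStarAlgAut 𝕜 _ hA.eigenvectorUnitary
      (1 + diagonal (RCLike.ofReal ∘ hA.eigenvalues)) := by
    rw [map_add, map_one, ← hA.spectral_theorem]
  rw [hconj, Unitary.conjStarAlgAut_apply, det_mul_right_comm,
    Unitary.mul_star_self_of_mem hA.eigenvectorUnitary.2, one_mul, ← diagonal_one, diagonal_add,
    det_diagonal]
  simp only [Function.comp_apply]

open scoped ComplexOrder in
theorem one_le_det_one_add_of_posSemidef {P : Matrix n n 𝕜} (hP : P.PosSemidef) :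
    1 ≤ (1 + P).det := by
  have hprod : 1 ≤ ∏ i, (1 + hP.isHermitian.eigenvalues i) :=
    Finset.one_le_prod fun i _ => le_add_of_nonneg_right (hP.eigenvalues_nonneg i)
  rw [det_one_add_eq_prod_eigenvalues hP.isHermitian]
  exact_mod_cast hprod

theorem one_le_norm_det_one_add_of_mem_skewAdjoint {K : Matrix n n 𝕜}
    (hK : K ∈ skewAdjoint (Matrix n n 𝕜)) : 1 ≤ ‖(1 + K).det‖ := by
  have hfactor : (1 + K)ᴴ * (1 + K) = 1 + Kᴴ * K := by
    rw [conjTranspose_add, conjTranspose_one, ← star_eq_conjTranspose, skewAdjoint.mem_iff.1 hK]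
    noncomm_ring
  open scoped ComplexOrder in
  have hsq : (1 : 𝕜) ≤ (‖(1 + K).det‖ : 𝕜) ^ 2 :=
    calc 1 ≤ (1 + Kᴴ * K).det :=
          one_le_det_one_add_of_posSemidef (posSemidef_conjTranspose_mul_self K)
      _ = star (1 + K).det * (1 + K).det := by rw [← hfactor, det_mul, det_conjTranspose]
      _ = (‖(1 + K).det‖ : 𝕜) ^ 2 := RCLike.conj_mul _
  exact (one_le_sq_iff₀ (norm_nonneg _)).1 (mod_cast hsq)

theorem one_le_det_one_add_of_mem_skewAdjoint {K : Matrix n n ℝ}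
    (hK : K ∈ skewAdjoint (Matrix n n ℝ)) : 1 ≤ (1 + K).det := by
  have hnorm (t : ℝ) : 1 ≤ |(1 + t • K).det| :=
    one_le_norm_det_one_add_of_mem_skewAdjoint (skewAdjoint.smul_mem t hK)
  have hcont : Continuous fun t : ℝ => (1 + t • K).det := by fun_prop
  have hone : 1 ≤ |(1 + K).det| := by simpa only [one_smul] using hnorm 1
  refine (le_abs.1 hone).resolve_right fun hneg => ?_
  obtain ⟨t, ht⟩ : ∃ t : ℝ, (1 + t • K).det = 0 :=
    mem_range_of_exists_le_of_exists_ge hcont ⟨1, by rw [one_smul]; linarith⟩ ⟨0, by simp⟩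
  exact absurd (hnorm t) (by norm_num [ht])

theorem det_le_det_add_of_posDef_of_mem_skewAdjoint {A B : Matrix n n ℝ} (hA : A.PosDef)
    (hB : B ∈ skewAdjoint (Matrix n n ℝ)) : A.det ≤ (A + B).det := by
  open scoped MatrixOrder in
  obtain ⟨Y, hY, rfl⟩ :=
    CStarAlgebra.isStrictlyPositive_iff_eq_star_mul_self.1 hA.isStrictlyPositive
  have hinv : Y⁻¹ * Y = 1 := nonsing_inv_mul Y ((isUnit_iff_isUnit_det Y).1 hY)
  have hstar : star Y * star Y⁻¹ = 1 := by rw [← star_mul, hinv, star_one]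
  set K : Matrix n n ℝ := star Y⁻¹ * B * Y⁻¹
  have hK : K ∈ skewAdjoint (Matrix n n ℝ) := skewAdjoint.conjugate' hB Y⁻¹
  have hB_eq : B = star Y * K * Y :=
    calc B = (star Y * star Y⁻¹) * B * (Y⁻¹ * Y) := by rw [hstar, hinv, one_mul, mul_one]
      _ = star Y * K * Y := by simp only [K, mul_assoc]
  calc (star Y * Y).det
      ≤ (star Y * Y).det * (1 + K).det :=
        le_mul_of_one_le_right hA.det_pos.le (one_le_det_one_add_of_mem_skewAdjoint hK)
    _ = (star Y * (1 + K) * Y).det := by rw [det_mul_right_comm, det_mul (star Y * Y)]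
    _ = (star Y * Y + B).det := by rw [hB_eq, mul_add, add_mul, mul_one]

theorem det_diagonal_add_skew_pos_general {A B : Matrix n n ℝ} (hA : A.PosDef) (hB : Bᵀ = -B) :
    A.det ≤ (A + B).det ∧ 0 < A.det ∧ IsUnit (A + B) := by
  have hle : A.det ≤ (A + B).det :=
    det_le_det_add_of_posDef_of_mem_skewAdjoint hA (skewAdjoint.mem_iff.2 hB)
  exact ⟨hle, hA.det_pos,
    (isUnit_iff_isUnit_det _).2 (hA.det_pos.trans_le hle).ne'.isUnit⟩

end

/-- For `A = diag(a₁,…,a_N)` with all `aᵢ > 0` and `B` real skew-symmetric,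
`det (A + B) ≥ Π aᵢ > 0`; in particular `A + B` is invertible. -/
theorem det_diagonal_add_skew_pos (N : ℕ) (a : Fin N → ℝ) (ha : ∀ i, 0 < a i)
    (B : Matrix (Fin N) (Fin N) ℝ) (hB : Bᵀ = -B) :
    (∏ i, a i) ≤ (Matrix.diagonal a + B).det ∧ 0 < ∏ i, a i ∧
      IsUnit (Matrix.diagonal a + B) := by
  simpa only [det_diagonal] using det_diagonal_add_skew_pos_general (PosDef.diagonal ha) hB
end

section
/- Let N be a natural number and let B be an N×N skew-symmetric matrix with integer entries. Then there exists a family of integers (m_K), indexed by the subsets K ⊆ {1,…,N}, with m_K = 0 whenever N − |K| is odd, such that for every choice of real numbers a₁,…,a_N one has det(diag(a₁,…,a_N) + B) = Σ_{K ⊆ {1,…,N}} m_K² · Π_{i∈K} a_i. -/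
open Matrix

/-!
Expanding `det (diagonal a + B)` multilinearly in the rows, the coefficient of `∏ i ∈ K, a i` is the
principal minor of `B` on the complement of `K`. This minor is the determinant of an alternating
matrix, so it suffices to show that such a determinant is a square, which vanishes in odd size.

An alternating matrix has the form `U - Uᵀ`, hence is a specialization of the generic matrix
`X - Xᵀ` over `ℤ[Xᵢⱼ]`. Over the fraction field of this ring, split off a nonsingular block
`!![0, x; -x, 0]`, of determinant `x ^ 2`. Its Schur complement is again alternating, so by
induction the generic determinant is the square of a rational function, and then of a polynomial
because `ℤ[Xᵢⱼ]` is integrally closed. In odd size `det A = det Aᵀ = -det A`, so the generic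
determinant vanishes.
-/

section IsAlternating

variable {m n R S : Type*} [CommRing R] [CommRing S]

/-- Alternating matrices, i.e. the Gram matrices of alternating bilinear forms. In characteristic
two, where skew-symmetric just means symmetric, the condition on the diagonal is a genuine one. -/
structure IsAlternating (A : Matrix n n R) : Prop where
  transpose_eq_neg : Aᵀ = -A
  diag_eq_zero : A.diag = 0

theorem isAlternating_of_transpose_eq_neg (h2 : IsLeftRegular (2 : R)) {A : Matrix n n R}
    (hA : Aᵀ = -A) : IsAlternating A where
  transpose_eq_neg := hA
  diag_eq_zero := funext fun i => h2 <| by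
    simpa [two_mul, ← eq_neg_iff_add_eq_zero] using congrFun₂ hA i i

theorem isAlternating_sub_transpose (U : Matrix n n R) : IsAlternating (U - Uᵀ) :=
  ⟨by simp, by ext; simp⟩

namespace IsAlternating

variable {A : Matrix n n R}

theorem apply_swap (hA : IsAlternating A) (i j : n) : A j i = -A i j :=
  congrFun₂ hA.transpose_eq_neg i j

theorem apply_self (hA : IsAlternating A) (i : n) : A i i = 0 :=
  congrFun hA.diag_eq_zero i

theorem submatrix (hA : IsAlternating A) (f : m → n) : IsAlternating (A.submatrix f f) :=
  ⟨by ext i j; exact hA.apply_swap (f i) (f j), funext fun i => hA.apply_self (f i)⟩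

theorem map (hA : IsAlternating A) (f : R →+* S) : IsAlternating (A.map f) :=
  ⟨by ext i j; simp [hA.apply_swap i j], by ext i; simp [hA.apply_self i]⟩

theorem exists_eq_sub_transpose (hA : IsAlternating A) : ∃ U : Matrix n n R, A = U - Uᵀ := by
  classical
  let := linearOrderOfSTO (WellOrderingRel (α := n))
  refine ⟨of fun i j => if i < j then A i j else 0, ?_⟩
  ext i j
  rcases lt_trichotomy i j with h | rfl | h
  · simp [h, h.not_gt]
  · simp [hA.apply_self]
  · simp [h, h.not_gt, hA.apply_swap j i]

theorem transpose_mul_mul [Fintype n] (hA : IsAlternating A) (P : Matrix n m R) :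
    IsAlternating (Pᵀ * A * P) := by
  obtain ⟨U, rfl⟩ := hA.exists_eq_sub_transpose
  convert isAlternating_sub_transpose (Pᵀ * U * P) using 1
  simp [Matrix.mul_sub, Matrix.sub_mul, Matrix.mul_assoc]

theorem schur_complement [Fintype m] [DecidableEq m] [Finite n] {A : Matrix m m R}
    {B : Matrix m n R} {C : Matrix n m R} {D : Matrix n n R} [Invertible A]
    (h : IsAlternating (fromBlocks A B C D)) : IsAlternating (D - C * ⅟A * B) := by
  classical
  cases nonempty_fintype n
  -- Block elimination of `B` is a congruence by `P = [-A⁻¹B; 1]`.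
  convert h.transpose_mul_mul (fromRows (-(⅟A * B)) 1) using 1
  rw [Matrix.mul_assoc (fromRows _ _)ᵀ, fromBlocks_mul_fromRows, transpose_fromRows,
    fromCols_mul_fromRows]
  simp [← Matrix.mul_assoc, sub_eq_neg_add]

end IsAlternating

theorem exists_equiv_fin_two_sum {i j : n} (hij : i ≠ j) :
    ∃ e : Fin 2 ⊕ ↥(Set.range ![i, j])ᶜ ≃ n, e (.inl 0) = i ∧ e (.inl 1) = j := by
  classical
  have hinj : Function.Injective ![i, j] := injective_pair_iff_ne.mpr hij
  exact ⟨((Equiv.ofInjective _ hinj).sumCongr (.refl _)).trans (Equiv.Set.sumCompl _), rfl, rfl⟩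

section Field

variable {F : Type*} [Field F]

namespace IsAlternating

theorem exists_det_eq_sq_mul_det [Fintype n] [DecidableEq n] {A : Matrix (Fin 2 ⊕ n) (Fin 2 ⊕ n) F}
    (hA : IsAlternating A) (hne : A (.inl 0) (.inl 1) ≠ 0) :
    ∃ C : Matrix n n F, IsAlternating C ∧ A.det = A (.inl 0) (.inl 1) ^ 2 * C.det := by
  have hdet : A.toBlocks₁₁.det = A (.inl 0) (.inl 1) ^ 2 := by
    simp [det_fin_two, toBlocks₁₁, hA.apply_self, hA.apply_swap (.inl 0) (.inl 1), sq]
  let := A.toBlocks₁₁.invertibleOfIsUnitDet (hdet ▸ (pow_ne_zero 2 hne).isUnit)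
  rw [← A.fromBlocks_toBlocks] at hA
  refine ⟨_, hA.schur_complement, ?_⟩
  rw [← hdet, ← det_fromBlocks₁₁, fromBlocks_toBlocks]

theorem isSquare_det_of_field [Fintype n] [DecidableEq n] {A : Matrix n n F}
    (hA : IsAlternating A) : IsSquare A.det := by
  induction hn : Fintype.card n using Nat.strong_induction_on generalizing n with
  | _ k ih =>
    rcases isEmpty_or_nonempty n with _ | _
    · simp
    by_cases h0 : A = 0
    · simp [h0]
    obtain ⟨i, j, hij⟩ : ∃ i j, A i j ≠ 0 := by
      by_contra! h
      exact h0 (Matrix.ext h)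
    have hne : i ≠ j := by
      rintro rfl
      exact hij (hA.apply_self i)
    obtain ⟨e, hei, hej⟩ := exists_equiv_fin_two_sum hne
    obtain ⟨C, hC, hdet⟩ := (hA.submatrix e).exists_det_eq_sq_mul_det (by simpa [hei, hej])
    rw [← det_submatrix_equiv_self e, hdet]
    exact (IsSquare.sq _).mul (ih _ (by simp [← hn, ← Fintype.card_congr e]) hC rfl)

end IsAlternating

end Field

theorem isSquare_of_isSquare_algebraMap (K : Type*) [Field K] [IsIntegrallyClosed R] [Algebra R K]
    [IsFractionRing R K] {r : R} (hr : IsSquare (algebraMap R K r)) : IsSquare r := by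
  obtain ⟨x, hx⟩ := hr
  have hint : IsIntegral R (x ^ 2) := by
    rw [sq, ← hx]
    exact isIntegral_algebraMap
  obtain ⟨s, rfl⟩ := IsIntegrallyClosed.exists_algebraMap_eq_of_isIntegral_pow two_pos hint
  exact ⟨s, IsFractionRing.injective R K (by rw [hx, map_mul])⟩

variable (n) in
/-- The generic alternating matrix: over a commutative ring, every alternating matrix is a
specialization of it. Writing it as `X - Xᵀ` avoids choosing an order on the index type. -/
noncomputable def genericAlternating : Matrix n n (MvPolynomial (n × n) ℤ) :=
  mvPolynomialX n n ℤ - (mvPolynomialX n n ℤ)ᵀ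

theorem isAlternating_genericAlternating : IsAlternating (genericAlternating n) :=
  isAlternating_sub_transpose _

theorem isSquare_det_genericAlternating [Fintype n] [DecidableEq n] :
    IsSquare (genericAlternating n).det := by
  let K := FractionRing (MvPolynomial (n × n) ℤ)
  apply isSquare_of_isSquare_algebraMap K
  rw [RingHom.map_det]
  exact (isAlternating_genericAlternating.map (algebraMap _ K)).isSquare_det_of_field

theorem det_genericAlternating_of_odd_card [Fintype n] [DecidableEq n]
    (hn : Odd (Fintype.card n)) : (genericAlternating n).det = 0 := by
  refine self_eq_neg.mp ?_
  calc
    (genericAlternating n).det = (-genericAlternating n).det := by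
      rw [← isAlternating_genericAlternating.transpose_eq_neg, det_transpose]
    _ = -(genericAlternating n).det := by rw [det_neg, hn.neg_one_pow, neg_one_mul]

namespace IsAlternating

variable {A : Matrix n n R}

theorem exists_map_genericAlternating (hA : IsAlternating A) :
    ∃ f : MvPolynomial (n × n) ℤ →+* R, (genericAlternating n).map f = A := by
  obtain ⟨U, rfl⟩ := hA.exists_eq_sub_transpose
  refine ⟨MvPolynomial.eval₂Hom (Int.castRingHom R) fun p => U p.1 p.2, ?_⟩
  ext i j
  simp [genericAlternating]

variable [Fintype n] [DecidableEq n]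

theorem isSquare_det (hA : IsAlternating A) : IsSquare A.det := by
  obtain ⟨f, rfl⟩ := hA.exists_map_genericAlternating
  rw [← f.mapMatrix_apply, ← f.map_det]
  exact isSquare_det_genericAlternating.map f

theorem det_eq_zero_of_odd_card (hA : IsAlternating A) (hn : Odd (Fintype.card n)) :
    A.det = 0 := by
  obtain ⟨f, rfl⟩ := hA.exists_map_genericAlternating
  rw [← f.mapMatrix_apply, ← f.map_det, det_genericAlternating_of_odd_card hn, map_zero]

theorem exists_det_eq_sq (hA : IsAlternating A) :
    ∃ r : R, (Odd (Fintype.card n) → r = 0) ∧ A.det = r ^ 2 := by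
  by_cases hn : Odd (Fintype.card n)
  · exact ⟨0, fun _ => rfl, by simp [hA.det_eq_zero_of_odd_card hn]⟩
  · obtain ⟨r, hr⟩ := hA.isSquare_det
    exact ⟨r, fun h => absurd h hn, hr.trans (sq r).symm⟩

end IsAlternating

end IsAlternating

section Expansion

variable {n R : Type*} [Fintype n] [DecidableEq n] [CommRing R]

theorem det_piecewise_diagonal (a : n → R) (B : Matrix n n R) (K : Finset n) :
    (of (K.piecewise (diagonal a) B)).det =
      (∏ i ∈ K, a i) * (B.submatrix ((↑) : ↥Kᶜ → n) (↑)).det := by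
  have hmul : of (K.piecewise (diagonal a) B) =
      diagonal (K.piecewise a 1) * of (Kᶜ.piecewise B.row (1 : Matrix n n R).row) := by
    ext i j
    by_cases hi : i ∈ K <;> simp [Finset.piecewise, hi, diagonal_apply, one_apply]
  rw [hmul, det_mul, det_diagonal, det_piecewise_one_eq_submatrix_det, Finset.prod_piecewise]
  simp

theorem det_diagonal_add (a : n → R) (B : Matrix n n R) :
    (diagonal a + B).det =
      ∑ K : Finset n, (∏ i ∈ K, a i) * (B.submatrix ((↑) : ↥Kᶜ → n) (↑)).det := by
  calc
    (diagonal a + B).det = ∑ K : Finset n, (of (K.piecewise (diagonal a) B)).det :=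
      detRowAlternating.map_add_univ (diagonal a) B
    _ = _ := by simp only [det_piecewise_diagonal]

end Expansion

theorem det_diagonal_add_int_skew_sq_coeffs_general {n R : Type*} [Fintype n] [DecidableEq n]
    [CommRing R] {B : Matrix n n R} (hB : IsAlternating B) :
    ∃ m : Finset n → R,
      (∀ K : Finset n, Odd (Fintype.card n - K.card) → m K = 0) ∧
      ∀ {S : Type*} [CommRing S] (f : R →+* S) (a : n → S),
        (diagonal a + B.map f).det = ∑ K : Finset n, f (m K) ^ 2 * ∏ i ∈ K, a i := by
  choose m hodd hdet using fun K : Finset n =>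
    (hB.submatrix ((↑) : ↥Kᶜ → n)).exists_det_eq_sq
  refine ⟨m, fun K hK => hodd K (by simpa [Finset.card_compl] using hK), fun f a => ?_⟩
  have hminor (K : Finset n) :
      ((B.map f).submatrix ((↑) : ↥Kᶜ → n) (↑)).det = f (m K) ^ 2 := by
    rw [submatrix_map, ← f.mapMatrix_apply, ← f.map_det, hdet, map_pow]
  simp only [det_diagonal_add, hminor, mul_comm]

/-- Abstract content of Lemma 3: for an integer skew-symmetric matrix `B`
there are integers `m_K`, vanishing when `N - |K|` is odd, such that for all
real `a₁,…,a_N` one has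
`det (diag(a) + B) = Σ_K m_K² Π_{i∈K} a_i`. -/
theorem det_diagonal_add_int_skew_sq_coeffs (N : ℕ)
    (B : Matrix (Fin N) (Fin N) ℤ) (hB : Bᵀ = -B) :
    ∃ m : Finset (Fin N) → ℤ,
      (∀ K : Finset (Fin N), Odd (N - K.card) → m K = 0) ∧
      ∀ a : Fin N → ℝ,
        (Matrix.diagonal a + B.map (Int.cast : ℤ → ℝ)).det
          = ∑ K : Finset (Fin N), (m K : ℝ) ^ 2 * ∏ i ∈ K, a i := by
  obtain ⟨m, hodd, hdet⟩ :=
    det_diagonal_add_int_skew_sq_coeffs_general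
      (isAlternating_of_transpose_eq_neg (IsRegular.of_ne_zero two_ne_zero).left hB)
  exact ⟨m, by simpa using hodd, hdet (Int.castRingHom ℝ)⟩
end

section
/- Let N be a natural number and let B be an N×N real skew-symmetric matrix. Then there exists a family of vectors v_K ∈ ℝ^N, indexed by the subsets K ⊆ {1,…,N} and not depending on the diagonal entries below, such that for every choice of real numbers a₁,…,a_N for which M = diag(a₁,…,a_N) + B is invertible, one has det(M) · ½(M⁻¹ + (M⁻¹)ᵀ) = Σ_{K ⊆ {1,…,N}} (Π_{i∈K} a_i) · v_K v_Kᵀ, where v_K v_Kᵀ denotes the rank-one outer-product matrix with entries (v_K)_τ (v_K)_{τ'}. In particular, when all a_i > 0, the matrix det(M) · ½(M⁻¹ + (M⁻¹)ᵀ) is a nonnegative linear combination of rank-one positive semidefinite matrices. -/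
/-!
Multiplying by the determinant turns `M⁻¹` into the adjugate of `M = diag(a) + B`. Expanding each
cofactor multilinearly in the rows of `M`, the coefficient of `∏ i ∈ K, a i` is the adjugate of the
principal submatrix of `B` on the complement of `K`, extended by zero. That submatrix is again
skew-symmetric, so it remains to see that the symmetric part of the adjugate of a skew-symmetric
matrix `C` of size `n` has the form `v vᵀ`. For existence alone the Pfaffians can be avoided:

* if `n` is even, then `adj C` is skew-symmetric and `v = 0` works;
* if `n` is odd, then `adj C` is symmetric and `det C = 0`, so that the `2 × 2` minors of `adj C`
  vanish. Its diagonal entries are determinants of skew-symmetric matrices, hence squares, and a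
  nonzero one, `s ^ 2 = (adj C) p p`, gives `adj C = v vᵀ` with `v k = (adj C) k p / s`.
-/

open Matrix

section Adjugate

variable {n R : Type*} [Fintype n] [DecidableEq n] [CommRing R]

theorem det_smul_inv {M : Matrix n n R} (hM : IsUnit M) : M.det • M⁻¹ = M.adjugate := by
  rw [inv_def, smul_smul, Ring.mul_inverse_cancel _ ((isUnit_iff_isUnit_det M).mp hM), one_smul]

theorem det_eq_det_toSquareBlockProp_not (M : Matrix n n R) (p : n → Prop) [DecidablePred p]
    (h : ∀ i, p i → ∀ j, M i j = (1 : Matrix n n R) i j) :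
    M.det = (M.toSquareBlockProp fun i => ¬p i).det := by
  have hone : M.toSquareBlockProp p = 1 := by
    ext ⟨i, hi⟩ ⟨j, hj⟩
    simp [toSquareBlockProp, h i hi, one_apply]
  rw [twoBlockTriangular_det' M p, hone, det_one, one_mul]
  intro i hi j hj
  rw [h i hi, one_apply_ne]
  rintro rfl
  exact hj hi

theorem adjugate_apply_self (B : Matrix n n R) (i : n) :
    B.adjugate i i = (B.toSquareBlockProp (· ≠ i)).det := by
  rw [adjugate_apply, det_eq_det_toSquareBlockProp_not _ (· = i)]
  · congr 1
    ext ⟨x, hx⟩ y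
    simp [toSquareBlockProp, hx]
  · rintro _ rfl y
    rw [updateRow_self, one_eq_pi_single]

theorem adjugate_mul_adjugate_of_det_eq_zero [NoZeroDivisors R] {B : Matrix n n R}
    (hB : B.det = 0) (i j k l : n) :
    B.adjugate i j * B.adjugate k l = B.adjugate i l * B.adjugate k j := by
  -- The combination `z` of two columns of `adj B`, all of which lie in `ker B`, has `z i = 0`.
  -- It is thus killed by `B` with column `i` replaced by `e_j`, whose determinant is `adj B i j`.
  have minor {j l : n} (hij : B.adjugate i j ≠ 0) :
      B.adjugate i j * B.adjugate k l = B.adjugate i l * B.adjugate k j := by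
    let z : n → R := B.adjugate i j • B.adjugate.col l - B.adjugate i l • B.adjugate.col j
    have hzi : z i = 0 := by simp [z, mul_comm]
    have hcol (m : n) : B *ᵥ B.adjugate.col m = 0 := by
      rw [← mulVec_single_one, mulVec_mulVec, mul_adjugate, hB, zero_smul, zero_mulVec]
    have hBz : B *ᵥ z = 0 := by
      simp only [z, mulVec_sub, mulVec_smul, hcol, smul_zero, sub_zero]
    have hupdate : B.updateCol i (Pi.single j 1) *ᵥ z = B *ᵥ z := by
      ext x
      refine Finset.sum_congr rfl fun y _ => ?_
      by_cases hy : y = i <;> simp [hy, hzi]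
    have hdet : (B.updateCol i (Pi.single j 1)).det ≠ 0 := by
      rwa [← cramer_apply, cramer_eq_adjugate_mulVec, mulVec_single_one]
    have hz : z = 0 := eq_zero_of_mulVec_eq_zero hdet (hupdate.trans hBz)
    exact sub_eq_zero.mp (congrFun hz k)
  by_cases hij : B.adjugate i j = 0
  · by_cases hil : B.adjugate i l = 0
    · rw [hij, hil, zero_mul, zero_mul]
    · exact (minor hil).symm
  · exact minor hij

theorem det_diagonal_mul_add (a : n → R) (X Y : Matrix n n R) :
    (diagonal a * X + Y).det =
      ∑ K : Finset n, (∏ k ∈ K, a k) * (of (K.piecewise X.row Y.row)).det := by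
  have hrows : diagonal a * X + Y = of ((fun k => a k • X.row k) + Y.row) := by
    ext k l
    simp [diagonal_mul]
  have hexpand := detRowAlternating.map_add_univ (fun k => a k • X.row k) Y.row
  rw [hrows]
  refine hexpand.trans (Finset.sum_congr rfl fun K _ => ?_)
  have hscale : K.piecewise (fun k => a k • X.row k) Y.row =
      of fun k l => (if k ∈ K then a k else 1) * of (K.piecewise X.row Y.row) k l := by
    ext k l
    by_cases hk : k ∈ K <;> simp [hk]
  rw [hscale, ← Finset.prod_ite_mem_eq]
  exact det_mul_column _ _

/-- The adjugate of the principal submatrix of `B` obtained by deleting the rows and columns in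
`K`, extended by zero to those rows and columns so that the matrices for different `K` can be
added. These are the coefficients of the adjugate of `diagonal a + B` as a polynomial in `a`. -/
def principalAdjugate (B : Matrix n n R) (K : Finset n) : Matrix n n R := fun i j =>
  if h : i ∉ K ∧ j ∉ K then (B.toSquareBlockProp (· ∉ K)).adjugate ⟨i, h.1⟩ ⟨j, h.2⟩ else 0

theorem det_piecewise_one_updateRow (B : Matrix n n R) {K : Finset n} (i : n) {j : n}
    (hj : j ∉ K) :
    (of (K.piecewise (1 : Matrix n n R).row (B.updateRow j (Pi.single i 1)).row)).det =
      principalAdjugate B K i j := by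
  by_cases hi : i ∈ K
  · have hij : i ≠ j := by
      rintro rfl
      exact hj hi
    rw [principalAdjugate, dif_neg (by simp [hi])]
    refine det_zero_of_row_eq hij ?_
    ext l
    simp [hi, hj, one_eq_pi_single]
  · rw [principalAdjugate, dif_pos ⟨hi, hj⟩, adjugate_apply,
      det_eq_det_toSquareBlockProp_not _ (· ∈ K) fun k hk l => by simp [hk]]
    congr 1
    ext ⟨x, hx⟩ y
    by_cases hxj : x = j
    · subst hxj
      simp [toSquareBlockProp, hx, Pi.single_apply, Subtype.ext_iff]
    · simp [toSquareBlockProp, hx, hxj]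

theorem adjugate_diagonal_add (a : n → R) (B : Matrix n n R) :
    (diagonal a + B).adjugate = ∑ K : Finset n, (∏ k ∈ K, a k) • principalAdjugate B K := by
  ext i j
  -- The `j`-th row of the cofactor matrix carries no diagonal term, so `a j` is replaced by `0`.
  have hrows : (diagonal a + B).updateRow j (Pi.single i 1) =
      diagonal (Function.update a j 0) * 1 + B.updateRow j (Pi.single i 1) := by
    ext k l
    by_cases hk : k = j
    · subst hk
      by_cases hl : k = l <;> simp [hl]
    · simp [hk, diagonal_apply]
  rw [adjugate_apply, hrows, det_diagonal_mul_add, Matrix.sum_apply]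
  refine Finset.sum_congr rfl fun K _ => ?_
  by_cases hj : j ∈ K
  · rw [Finset.prod_eq_zero hj (Function.update_self ..)]
    simp [principalAdjugate, hj]
  · rw [Finset.prod_update_of_notMem hj, det_piecewise_one_updateRow B i hj, Matrix.smul_apply,
      smul_eq_mul]

end Adjugate

section OuterProduct

theorem exists_eq_vecMulVec_self {n 𝕜 : Type*} [Field 𝕜] {A : Matrix n n 𝕜} (hA : A.IsSymm)
    (hminor : ∀ i j k l, A i j * A k l = A i l * A k j) (hdiag : ∀ i, IsSquare (A i i)) :
    ∃ v : n → 𝕜, A = vecMulVec v v := by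
  by_cases hzero : ∀ i, A i i = 0
  · refine ⟨0, ?_⟩
    ext i j
    have h := hminor i j j i
    rw [hA.apply i j, hzero i, zero_mul, mul_self_eq_zero] at h
    simp [h]
  · obtain ⟨p, hp⟩ := not_forall.mp hzero
    obtain ⟨s, hs⟩ := hdiag p
    refine ⟨fun k => A k p / s, ?_⟩
    ext i j
    rw [vecMulVec_apply, div_mul_div_comm, ← hs, eq_div_iff hp, hminor, hA.apply p j]

theorem posSemidef_sum_smul_vecMulVec_self {ι n R : Type*} [Finite n] [CommRing R] [PartialOrder R]
    [StarRing R] [StarOrderedRing R] [TrivialStar R] (s : Finset ι) {c : ι → R}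
    (hc : ∀ i ∈ s, 0 ≤ c i) (v : ι → n → R) :
    (∑ i ∈ s, c i • vecMulVec (v i) (v i)).PosSemidef := by
  refine posSemidef_sum s fun i hi => PosSemidef.smul ?_ (hc i hi)
  simpa using posSemidef_vecMulVec_self_star (v i)

end OuterProduct

section Skew

theorem transpose_submatrix_self_eq_neg {m n R : Type*} [Neg R] {B : Matrix n n R}
    (hB : Bᵀ = -B) (f : m → n) : (B.submatrix f f)ᵀ = -B.submatrix f f := by
  rw [transpose_submatrix, hB]
  rfl

theorem transpose_schurComplement_eq_neg {m n R : Type*} [Fintype m] [DecidableEq m] [CommRing R]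
    {A : Matrix m m R} [Invertible A] {B : Matrix m n R} {C : Matrix n m R} {D : Matrix n n R}
    (h : (fromBlocks A B C D)ᵀ = -fromBlocks A B C D) :
    (D - C * ⅟A * B)ᵀ = -(D - C * ⅟A * B) := by
  rw [fromBlocks_transpose, fromBlocks_neg, fromBlocks_inj] at h
  obtain ⟨hA, hC, hB, hD⟩ := h
  have hinv : (⅟A)ᵀ = -⅟A := by
    let := A.invertibleTranspose
    let := invertibleNeg A
    simp only [transpose_invOf, hA, invOf_neg]
  rw [transpose_sub, transpose_mul, transpose_mul, hB, hC, hD, hinv]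
  simp only [Matrix.neg_mul, Matrix.mul_neg, neg_neg, Matrix.mul_assoc]
  abel

theorem exists_equiv_sum_compl_range {α β : Type*} {f : α → β} (hf : f.Injective) :
    ∃ e : α ⊕ ((Set.range f)ᶜ : Set β) ≃ β, ∀ a, e (.inl a) = f a := by
  classical
  exact ⟨((Equiv.ofInjective f hf).sumCongr (.refl _)).trans (Equiv.Set.sumCompl _),
    fun a => by simp⟩

theorem apply_self_eq_zero_of_transpose_eq_neg {n R : Type*} [Ring R] [NoZeroDivisors R]
    [NeZero (2 : R)] {B : Matrix n n R} (hB : Bᵀ = -B) (i : n) : B i i = 0 := by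
  have h : B i i = -B i i := congrFun (congrFun hB i) i
  rw [eq_neg_iff_add_eq_zero, ← two_mul] at h
  exact (mul_eq_zero.mp h).resolve_left two_ne_zero

theorem det_fin_two_of_transpose_eq_neg {R : Type*} [CommRing R] [NoZeroDivisors R]
    [NeZero (2 : R)] {A : Matrix (Fin 2) (Fin 2) R} (hA : Aᵀ = -A) : A.det = A 0 1 * A 0 1 := by
  have h : A 1 0 = -A 0 1 := congrFun (congrFun hA 0) 1
  rw [det_fin_two, apply_self_eq_zero_of_transpose_eq_neg hA, h]
  ring

theorem det_eq_zero_of_transpose_eq_neg {n R : Type*} [Fintype n] [DecidableEq n] [CommRing R]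
    [NoZeroDivisors R] [NeZero (2 : R)] {B : Matrix n n R} (hB : Bᵀ = -B)
    (hn : Odd (Fintype.card n)) : B.det = 0 := by
  have h : B.det = -B.det := by
    rw [← neg_one_mul, ← hn.neg_one_pow, ← det_neg, ← hB, det_transpose]
  rw [eq_neg_iff_add_eq_zero, ← two_mul] at h
  exact (mul_eq_zero.mp h).resolve_left two_ne_zero

theorem transpose_adjugate_of_transpose_eq_neg {n R : Type*} [Fintype n] [DecidableEq n]
    [CommRing R] {B : Matrix n n R} (hB : Bᵀ = -B) :
    B.adjugateᵀ = (-1 : R) ^ (Fintype.card n - 1) • B.adjugate := by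
  rw [adjugate_transpose, hB, ← neg_one_smul R B, adjugate_smul]

variable {n 𝕜 : Type*} [Fintype n] [DecidableEq n] [Field 𝕜] [NeZero (2 : 𝕜)] {B : Matrix n n 𝕜}

theorem isSquare_det_of_transpose_eq_neg (hB : Bᵀ = -B) : IsSquare B.det := by
  -- A nonzero entry spans an invertible `2 × 2` principal block whose determinant is a square,
  -- and the Schur complement of that block is a smaller skew-symmetric matrix.
  induction hcard : Fintype.card n using Nat.strong_induction_on generalizing n with
  | _ d ih =>
  by_cases hzero : B = 0
  · cases isEmpty_or_nonempty n <;> simp [hzero]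
  obtain ⟨i, j, hij⟩ : ∃ i j, B i j ≠ 0 := by
    contrapose! hzero
    exact ext hzero
  have hne : i ≠ j := by
    rintro rfl
    exact hij (apply_self_eq_zero_of_transpose_eq_neg hB i)
  obtain ⟨e, he⟩ := exists_equiv_sum_compl_range (injective_pair_iff_ne.mpr hne)
  let C := B.submatrix e e
  have hC : Cᵀ = -C := transpose_submatrix_self_eq_neg hB e
  have hblock : C.toBlocks₁₁ᵀ = -C.toBlocks₁₁ := transpose_submatrix_self_eq_neg hC Sum.inl
  have hdet : C.toBlocks₁₁.det = B i j * B i j := by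
    rw [det_fin_two_of_transpose_eq_neg hblock]
    simp [C, toBlocks₁₁, he]
  have hunit : IsUnit C.toBlocks₁₁.det := by
    rw [hdet]
    exact (mul_ne_zero hij hij).isUnit
  let := invertibleOfIsUnitDet _ hunit
  classical
  have hlt : Fintype.card ((Set.range ![i, j])ᶜ : Set n) < d :=
    hcard ▸ Fintype.card_subtype_lt (x := i) (by simp)
  rw [← fromBlocks_toBlocks C] at hC
  have hschur := ih _ hlt (transpose_schurComplement_eq_neg hC) rfl
  rw [← det_submatrix_equiv_self e, ← fromBlocks_toBlocks (B.submatrix e e), det_fromBlocks₁₁]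
  exact IsSquare.mul ⟨_, hdet⟩ hschur

theorem exists_symm_part_adjugate_eq_vecMulVec_self (hB : Bᵀ = -B) :
    ∃ v : n → 𝕜, (2⁻¹ : 𝕜) • (B.adjugate + B.adjugateᵀ) = vecMulVec v v := by
  have hT := transpose_adjugate_of_transpose_eq_neg hB
  rcases Nat.even_or_odd (Fintype.card n) with heven | hodd
  · cases isEmpty_or_nonempty n
    · exact ⟨0, Subsingleton.elim _ _⟩
    · rw [(Nat.Even.sub_odd Fintype.card_pos heven odd_one).neg_one_pow, neg_one_smul] at hT
      exact ⟨0, by simp [hT]⟩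
  · have hsymm : B.adjugate.IsSymm := by
      rw [IsSymm, hT, (Nat.Odd.sub_odd hodd odd_one).neg_one_pow, one_smul]
    have hdiag (i : n) : IsSquare (B.adjugate i i) := by
      rw [adjugate_apply_self]
      exact isSquare_det_of_transpose_eq_neg (transpose_submatrix_self_eq_neg hB _)
    have hminor := adjugate_mul_adjugate_of_det_eq_zero (det_eq_zero_of_transpose_eq_neg hB hodd)
    obtain ⟨v, hv⟩ := exists_eq_vecMulVec_self hsymm hminor hdiag
    exact ⟨v, by rw [hsymm, ← two_smul 𝕜, inv_smul_smul₀ two_ne_zero, hv]⟩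

theorem exists_symm_part_principalAdjugate_eq_vecMulVec_self (hB : Bᵀ = -B) (K : Finset n) :
    ∃ v : n → 𝕜,
      (2⁻¹ : 𝕜) • (principalAdjugate B K + (principalAdjugate B K)ᵀ) = vecMulVec v v := by
  obtain ⟨w, hw⟩ := exists_symm_part_adjugate_eq_vecMulVec_self
    (B := B.toSquareBlockProp (· ∉ K)) (transpose_submatrix_self_eq_neg hB _)
  refine ⟨fun i => if h : i ∉ K then w ⟨i, h⟩ else 0, ?_⟩
  ext i j
  by_cases hi : i ∈ K
  · simp [principalAdjugate, vecMulVec_apply, hi]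
  by_cases hj : j ∈ K
  · simp [principalAdjugate, vecMulVec_apply, hj]
  have hwij := congrFun (congrFun hw ⟨i, hi⟩) ⟨j, hj⟩
  simpa [principalAdjugate, vecMulVec_apply, hi, hj] using hwij

theorem det_smul_symm_part_inv_eq_sum_outer_general (hB : Bᵀ = -B) :
    ∃ v : Finset n → n → 𝕜, ∀ a : n → 𝕜, IsUnit (diagonal a + B) →
      (diagonal a + B).det • ((2⁻¹ : 𝕜) • ((diagonal a + B)⁻¹ + ((diagonal a + B)⁻¹)ᵀ)) =
        ∑ K : Finset n, (∏ i ∈ K, a i) • vecMulVec (v K) (v K) := by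
  choose v hv using exists_symm_part_principalAdjugate_eq_vecMulVec_self hB
  refine ⟨v, fun a hM => ?_⟩
  calc
    _ = (2⁻¹ : 𝕜) • ((diagonal a + B).adjugate + (diagonal a + B).adjugateᵀ) := by
      rw [smul_comm, smul_add, ← transpose_smul, det_smul_inv hM]
    _ = ∑ K : Finset n, (∏ i ∈ K, a i) •
          (2⁻¹ : 𝕜) • (principalAdjugate B K + (principalAdjugate B K)ᵀ) := by
      rw [adjugate_diagonal_add, transpose_sum, ← Finset.sum_add_distrib, Finset.smul_sum]
      simp only [transpose_smul, ← smul_add, smul_comm (2⁻¹ : 𝕜)]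
    _ = _ := by simp only [hv]

end Skew

/-- Matrix-algebra content of Lemma 4: for `B` real skew-symmetric there are
vectors `v_K` (independent of the diagonal entries) such that whenever
`M = diag(a) + B` is invertible,
`det M · ½(M⁻¹ + (M⁻¹)ᵀ) = Σ_K (Π_{i∈K} a_i) v_K v_Kᵀ`; in particular when all
`a_i > 0` this matrix is a nonnegative combination of rank-one positive
semidefinite matrices, hence positive semidefinite. -/
theorem det_smul_symm_part_inv_eq_sum_outer (N : ℕ)
    (B : Matrix (Fin N) (Fin N) ℝ) (hB : Bᵀ = -B) :
    ∃ v : Finset (Fin N) → (Fin N → ℝ),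
      (∀ a : Fin N → ℝ, IsUnit (Matrix.diagonal a + B) →
        (Matrix.diagonal a + B).det •
            ((2⁻¹ : ℝ) • ((Matrix.diagonal a + B)⁻¹ + ((Matrix.diagonal a + B)⁻¹)ᵀ))
          = ∑ K : Finset (Fin N), (∏ i ∈ K, a i) • Matrix.vecMulVec (v K) (v K)) ∧
      (∀ a : Fin N → ℝ, (∀ i, 0 < a i) → IsUnit (Matrix.diagonal a + B) →
        ((Matrix.diagonal a + B).det •
            ((2⁻¹ : ℝ) •
              ((Matrix.diagonal a + B)⁻¹ + ((Matrix.diagonal a + B)⁻¹)ᵀ))).PosSemidef) := by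
  obtain ⟨v, hv⟩ := det_smul_symm_part_inv_eq_sum_outer_general hB
  refine ⟨v, hv, fun a ha hM => hv a hM ▸ posSemidef_sum_smul_vecMulVec_self _ ?_ v⟩
  exact fun K _ => Finset.prod_nonneg fun i _ => (ha i).le
end
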